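/- Every nonempty finite set S of dyadic squares in [0,1]² with pairwise disjoint interiors contains a square s that is corner-adjacent to at most five other squares of S. (Equivalently, the corner-adjacency graph of any subset of the squares of a quadtree has a vertex of degree at most five, i.e., the corner-adjacency graph of a quadtree is 5-degenerate.) -/

import Mathlib

/-- A dyadic square `[i/2^k, (i+1)/2^k] × [j/2^k, (j+1)/2^k] ⊆ [0,1]²`,
recorded by its level `k` and coordinates `i, j < 2^k`. -/
structure DyadicSquare where
  k : ℕ
  i : ℕ
  j : ℕ
  hi : i < 2 ^ k
  hj : j < 2 ^ k
deriving DecidableEq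

namespace DyadicSquare

/-- The subset of the plane occupied by a dyadic square. -/
def region (s : DyadicSquare) : Set (ℝ × ℝ) :=
  Set.Icc ((s.i : ℝ) / 2 ^ s.k) (((s.i : ℝ) + 1) / 2 ^ s.k) ×ˢ
    Set.Icc ((s.j : ℝ) / 2 ^ s.k) (((s.j : ℝ) + 1) / 2 ^ s.k)

/-- Two squares are edge-adjacent if they are distinct and their intersection
contains more than one point (a segment of positive length). -/
def EdgeAdj (s t : DyadicSquare) : Prop :=
  s ≠ t ∧ (s.region ∩ t.region).Nontrivial

/-- Two squares are corner-adjacent if they are distinct and their intersection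
is nonempty (they share at least a corner point or part of an edge). -/
def CornerAdj (s t : DyadicSquare) : Prop :=
  s ≠ t ∧ (s.region ∩ t.region).Nonempty

end DyadicSquare

/-- A finite set of dyadic squares has pairwise disjoint interiors. -/
def PairwiseDisjointInteriors (Q : Finset DyadicSquare) : Prop :=
  (Q : Set DyadicSquare).Pairwise fun s t =>
    interior s.region ∩ interior t.region = ∅

/-- A quadtree: a finite set of dyadic squares with pairwise disjoint interiors
whose union is the unit square `[0,1]²`. -/
def IsQuadtree (Q : Finset DyadicSquare) : Prop :=
  PairwiseDisjointInteriors Q ∧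
    (⋃ s ∈ Q, s.region) = Set.Icc (0 : ℝ) 1 ×ˢ Set.Icc (0 : ℝ) 1

/-- A quadtree is balanced if any two edge-adjacent squares have side lengths
(`2^{-k}`) within a factor of two of each other. -/
def IsBalanced (Q : Finset DyadicSquare) : Prop :=
  ∀ s ∈ Q, ∀ t ∈ Q, DyadicSquare.EdgeAdj s t → s.k ≤ t.k + 1 ∧ t.k ≤ s.k + 1

/-- Side length of `s` measured in units of `2^{-N}`. -/
def dsW (N : ℕ) (s : DyadicSquare) : ℤ := 2 ^ (N - s.k)

/-- Left coordinate of `s` in units of `2^{-N}`. -/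
def dsX (N : ℕ) (s : DyadicSquare) : ℤ := s.i * dsW N s

/-- Bottom coordinate of `s` in units of `2^{-N}`. -/
def dsY (N : ℕ) (s : DyadicSquare) : ℤ := s.j * dsW N s

/-- The unit cell with lower left corner `c` lies in `s`. -/
def dsCell (N : ℕ) (s : DyadicSquare) (c : ℤ × ℤ) : Prop :=
  dsX N s ≤ c.1 ∧ c.1 + 1 ≤ dsX N s + dsW N s ∧ dsY N s ≤ c.2 ∧ c.2 + 1 ≤ dsY N s + dsW N s

lemma dsW_pos (N : ℕ) (s : DyadicSquare) : 0 < dsW N s := by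
  unfold dsW; positivity

lemma ds_scale (N k : ℕ) (h : k ≤ N) (a : ℝ) :
    a / 2 ^ k = (a * 2 ^ (N - k)) / 2 ^ N := by
  have : (2 : ℝ) ^ N = 2 ^ k * 2 ^ (N - k) := by rw [← pow_add]; congr 1; omega
  rw [this]; field_simp

lemma ds_region (N : ℕ) (s : DyadicSquare) (h : s.k ≤ N) :
    s.region = Set.Icc ((dsX N s : ℝ) / 2 ^ N) (((dsX N s + dsW N s : ℤ) : ℝ) / 2 ^ N) ×ˢ
      Set.Icc ((dsY N s : ℝ) / 2 ^ N) (((dsY N s + dsW N s : ℤ) : ℝ) / 2 ^ N) := by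
  unfold DyadicSquare.region
  rw [ds_scale N s.k h, ds_scale N s.k h, ds_scale N s.k h, ds_scale N s.k h]
  simp only [dsX, dsY, dsW]
  push_cast
  simp only [add_mul, one_mul]

/-- The center of a cell of `s` is in the interior of `s`. -/
lemma ds_center (N : ℕ) (s : DyadicSquare) (h : s.k ≤ N) (c : ℤ × ℤ) (hc : dsCell N s c) :
    ((((c.1 : ℝ) + 1 / 2) / 2 ^ N, ((c.2 : ℝ) + 1 / 2) / 2 ^ N) : ℝ × ℝ) ∈ interior s.region := by
  rw [ds_region N s h, interior_prod_eq, interior_Icc, interior_Icc]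
  obtain ⟨h1, h2, h3, h4⟩ := hc
  have h1' : (dsX N s : ℝ) ≤ c.1 := by exact_mod_cast h1
  have h2' : (c.1 : ℝ) + 1 ≤ ((dsX N s + dsW N s : ℤ) : ℝ) := by exact_mod_cast h2
  have h3' : (dsY N s : ℝ) ≤ c.2 := by exact_mod_cast h3
  have h4' : (c.2 : ℝ) + 1 ≤ ((dsY N s + dsW N s : ℤ) : ℝ) := by exact_mod_cast h4
  have hp : (0 : ℝ) < 2 ^ N := by positivity
  refine ⟨⟨?_, ?_⟩, ⟨?_, ?_⟩⟩ <;> apply div_lt_div_of_pos_right _ hp <;> linarith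

/-- Two squares with disjoint interiors share no cell. -/
lemma ds_cell_unique (S : Finset DyadicSquare) (hdisj : PairwiseDisjointInteriors S) (N : ℕ)
    (hN : ∀ s ∈ S, s.k ≤ N) (s t : DyadicSquare) (hs : s ∈ S) (ht : t ∈ S) (c : ℤ × ℤ)
    (h1 : dsCell N s c) (h2 : dsCell N t c) : s = t := by
  by_contra hst
  have h := hdisj (Finset.mem_coe.2 hs) (Finset.mem_coe.2 ht) hst
  have hm := Set.mem_inter (ds_center N s (hN s hs) c h1) (ds_center N t (hN t ht) c h2)
  simp only at h
  rw [h] at hm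
  exact hm

lemma ds_touch (N : ℕ) (s t : DyadicSquare) (hs : s.k ≤ N) (ht : t.k ≤ N)
    (h : (s.region ∩ t.region).Nonempty) :
    dsX N t ≤ dsX N s + dsW N s ∧ dsX N s ≤ dsX N t + dsW N t ∧
    dsY N t ≤ dsY N s + dsW N s ∧ dsY N s ≤ dsY N t + dsW N t := by
  rw [ds_region N s hs, ds_region N t ht] at h
  obtain ⟨⟨x, y⟩, ⟨⟨a1, a2⟩, ⟨a3, a4⟩⟩, ⟨⟨b1, b2⟩, ⟨b3, b4⟩⟩⟩ := h
  have hp : (0 : ℝ) < 2 ^ N := by positivity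
  have key : ∀ a b : ℤ, (a : ℝ) / 2 ^ N ≤ (b : ℝ) / 2 ^ N → a ≤ b := by
    intro a b hab
    exact_mod_cast (div_le_div_iff_of_pos_right hp).1 hab
  exact ⟨key _ _ (b1.trans a2), key _ _ (a1.trans b2), key _ _ (b3.trans a4),
    key _ _ (a3.trans b4)⟩

/-- One-dimensional step: the position of a neighbour on the left side. -/
lemma ds_side (V W B Y : ℤ) (hW : 0 < W) (hVB : V ∣ B) (hWY : W ∣ Y)
    (hdvd : (V < W ∧ V ∣ W) ∨ (W ≤ V ∧ W ∣ V)) (hB : B ≤ Y + W) (hY : Y < B)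
    (hsum : B ≤ Y + V) (htie : B = Y + V → W ≤ V) : B = Y + W := by
  rcases hdvd with ⟨h1, h2⟩ | ⟨h1, h2⟩
  · have := Int.le_of_dvd (by omega) (dvd_sub hVB (h2.trans hWY))
    have := htie (by omega)
    omega
  · have := Int.le_of_dvd (by omega) (dvd_sub (h2.trans hVB) hWY)
    omega

/-- Every neighbour that is not later in the elimination order contains one of five cells. -/
lemma ds_cover (V W A B X Y : ℤ) (hV : 0 < V) (hW : 0 < W) (hVA : V ∣ A) (hVB : V ∣ B)
    (hWX : W ∣ X) (hWY : W ∣ Y) (hdvd : (V < W ∧ V ∣ W) ∨ (W ≤ V ∧ W ∣ V))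
    (t1 : A ≤ X + W) (t2 : X ≤ A + V) (t3 : B ≤ Y + W) (t4 : Y ≤ B + V)
    (hd : A + V ≤ X ∨ X + W ≤ A ∨ B + V ≤ Y ∨ Y + W ≤ B)
    (hsum : A + B ≤ X + Y) (htie : A + B = X + Y → W ≤ V) :
    ∃ c ∈ ({(X - 1, Y), (X, Y - 1), (X - 1, Y - 1), (X - 1, Y + W), (X + W, Y - 1)} :
      Finset (ℤ × ℤ)), A ≤ c.1 ∧ c.1 + 1 ≤ A + V ∧ B ≤ c.2 ∧ c.2 + 1 ≤ B + V := by
  rcases hd with h | h | h | h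
  · rcases lt_trichotomy B Y with hb | hb | hb
    · exact ⟨(X - 1, Y - 1), by simp, by simp only; omega⟩
    · exact ⟨(X - 1, Y), by simp, by simp only; omega⟩
    · have := ds_side V W B Y hW hVB hWY hdvd t3 hb (by omega) (fun e => htie (by omega))
      exact ⟨(X - 1, Y + W), by simp, by simp only; omega⟩
  · exact ⟨(X + W, Y - 1), by simp, by simp only; omega⟩
  · rcases lt_trichotomy A X with hb | hb | hb
    · exact ⟨(X - 1, Y - 1), by simp, by simp only; omega⟩
    · exact ⟨(X, Y - 1), by simp, by simp only; omega⟩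
    · have := ds_side V W A X hW hVA hWX hdvd t1 hb (by omega) (fun e => htie (by omega))
      exact ⟨(X + W, Y - 1), by simp, by simp only; omega⟩
  · exact ⟨(X - 1, Y + W), by simp, by simp only; omega⟩

lemma ds_dvd (N : ℕ) (s t : DyadicSquare) :
    (dsW N t < dsW N s ∧ dsW N t ∣ dsW N s) ∨ (dsW N s ≤ dsW N t ∧ dsW N s ∣ dsW N t) := by
  by_cases h : N - s.k ≤ N - t.k
  · right
    have hd : dsW N s ∣ dsW N t := pow_dvd_pow 2 h
    exact ⟨Int.le_of_dvd (dsW_pos N t) hd, hd⟩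
  · left
    exact ⟨pow_lt_pow_right₀ (by norm_num) (by omega), pow_dvd_pow 2 (by omega)⟩

open scoped Classical in
/-- Any nonempty finite set of dyadic squares with pairwise disjoint interiors
contains a square corner-adjacent to at most five of the others: the
corner-adjacency graph of a quadtree is 5-degenerate. -/
theorem dyadic_squares_corner_degeneracy (S : Finset DyadicSquare)
    (hne : S.Nonempty) (hdisj : PairwiseDisjointInteriors S) :
    ∃ s ∈ S, (S.filter fun t => DyadicSquare.CornerAdj s t).card ≤ 5 := by
  set N := S.sup DyadicSquare.k with hNdef
  have hN : ∀ s ∈ S, s.k ≤ N := fun s hs => Finset.le_sup (f := DyadicSquare.k) hs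
  -- choose the square with lexicographically largest (left + bottom, level)
  obtain ⟨s, hs, hmax⟩ := Finset.exists_max_image S
    (fun s => toLex (dsX N s + dsY N s, - dsW N s)) hne
  refine ⟨s, hs, ?_⟩
  let C : Finset (ℤ × ℤ) := {(dsX N s - 1, dsY N s), (dsX N s, dsY N s - 1),
    (dsX N s - 1, dsY N s - 1), (dsX N s - 1, dsY N s + dsW N s),
    (dsX N s + dsW N s, dsY N s - 1)}
  have hC : C.card ≤ 5 := Finset.card_le_five
  have hcov : ∀ t ∈ S.filter (fun t => DyadicSquare.CornerAdj s t), ∃ c ∈ C, dsCell N t c := by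
    intro t ht
    rw [Finset.mem_filter] at ht
    obtain ⟨htS, hne', hint⟩ := ht
    obtain ⟨t1, t2, t3, t4⟩ := ds_touch N s t (hN s hs) (hN t htS) hint
    have hm := hmax t htS
    rw [Prod.Lex.toLex_le_toLex] at hm
    simp only at hm
    have hWs := dsW_pos N s
    have hWt := dsW_pos N t
    refine ds_cover (dsW N t) (dsW N s) (dsX N t) (dsY N t) (dsX N s) (dsY N s) hWt hWs
      (Dvd.intro_left _ rfl) (Dvd.intro_left _ rfl) (Dvd.intro_left _ rfl) (Dvd.intro_left _ rfl)
      (ds_dvd N s t) t1 t2 t3 t4 ?_ (by omega) (by omega)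
    by_contra hcon
    push Not at hcon
    apply hne'
    refine ds_cell_unique S hdisj N hN s t hs htS
      (max (dsX N s) (dsX N t), max (dsY N s) (dsY N t)) ?_ ?_ <;>
    · unfold dsCell
      simp only
      omega
  choose! f hf using hcov
  refine le_trans (Finset.card_le_card_of_injOn f (fun t ht => (hf t ht).1) ?_) hC
  intro t ht u hu htu
  have ht' := Finset.mem_coe.1 ht
  have hu' := Finset.mem_coe.1 hu
  refine ds_cell_unique S hdisj N hN t u (Finset.mem_filter.1 ht').1
    (Finset.mem_filter.1 hu').1 (f t) (hf t ht').2 ?_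
  rw [htu]
  exact (hf u hu').2
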